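/- arXiv:math/0405163 — 13 statements merged into one kernel-verified Lean document; each statement's English description precedes it below -/
import Mathlib

section
/- Let C be a nonempty closed convex subset of a Banach space E and let T be a nonexpansive mapping on C. If T satisfies condition (C2), then T satisfies condition (C1). -/
/-- Proposition 1 (part): (C2) ⇒ (C1) for a nonexpansive mapping on a nonempty
closed convex subset of a Banach space. -/
theorem c2_implies_c1
    {E : Type*} [NormedAddCommGroup E] [NormedSpace ℝ E] [CompleteSpace E]
    (C : Set E) (hCne : C.Nonempty) (hCcl : IsClosed C) (hCcv : Convex ℝ C)
    (T : E → E) (hTC : Set.MapsTo T C C)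
    (hTne : ∀ x ∈ C, ∀ y ∈ C, ‖T x - T y‖ ≤ ‖x - y‖)
    (hC2 : ∃ r ∈ Set.Ioo (0 : ℝ) 1, ∃ x₀ ∈ C, ∃ η > (0 : ℝ),
      ∀ y ∈ C, η < ‖y‖ → ‖T x₀ - T y‖ ≤ r * ‖x₀ - y‖) :
    ∃ r ∈ Set.Ioo (0 : ℝ) 1, ∀ x₁ ∈ C, ∃ η > (0 : ℝ),
      ∀ y ∈ C, η < ‖y‖ → ‖T x₁ - T y‖ ≤ r * ‖x₁ - y‖ := by
  obtain ⟨r, ⟨hr0, hr1⟩, x₀, hx₀, η, hη, h⟩ := hC2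
  refine ⟨(1 + r) / 2, ⟨by linarith, by linarith⟩, fun x₁ hx₁ ↦ ?_⟩
  have hr : 0 < 1 - r := sub_pos.2 hr1
  have hd : 0 ≤ 4 * ‖x₁ - x₀‖ / (1 - r) := by positivity
  refine ⟨η + ‖x₁‖ + 4 * ‖x₁ - x₀‖ / (1 - r), by positivity, fun y hy hlt ↦ ?_⟩
  have hTy := h y hy (by linarith [norm_nonneg x₁])
  have hT₁ := hTne x₁ hx₁ x₀ hx₀
  have htri := norm_sub_le_norm_sub_add_norm_sub (T x₁) (T x₀) (T y)
  have hx₀y : ‖x₀ - y‖ ≤ ‖x₁ - x₀‖ + ‖x₁ - y‖ := by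
    simpa only [norm_sub_rev x₀ x₁] using norm_sub_le_norm_sub_add_norm_sub x₀ x₁ y
  have hfar : 4 * ‖x₁ - x₀‖ / (1 - r) ≤ ‖x₁ - y‖ := by
    linarith [norm_sub_norm_le y x₁, norm_sub_rev y x₁]
  rw [div_le_iff₀ hr] at hfar
  have hmul := mul_le_mul_of_nonneg_left hx₀y hr0.le
  have hrd := mul_le_mul_of_nonneg_right hr1.le (norm_nonneg (x₁ - x₀))
  linarith
end

section
/- Let C be a nonempty closed convex subset of a Banach space E and let T be a nonexpansive mapping on C. If T satisfies condition (C2), then T satisfies condition (C4). -/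
/-- Proposition 1 (part): (C2) ⇒ (C4) for a nonexpansive mapping on a nonempty
closed convex subset of a Banach space. -/
theorem c2_implies_c4
    {E : Type*} [NormedAddCommGroup E] [NormedSpace ℝ E] [CompleteSpace E]
    (C : Set E) (hCne : C.Nonempty) (hCcl : IsClosed C) (hCcv : Convex ℝ C)
    (T : E → E) (hTC : Set.MapsTo T C C)
    (hTne : ∀ x ∈ C, ∀ y ∈ C, ‖T x - T y‖ ≤ ‖x - y‖)
    (hC2 : ∃ r ∈ Set.Ioo (0 : ℝ) 1, ∃ x₀ ∈ C, ∃ η > (0 : ℝ),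
      ∀ y ∈ C, η < ‖y‖ → ‖T x₀ - T y‖ ≤ r * ‖x₀ - y‖) :
    ∃ x₀ ∈ C, ∀ lam > (0 : ℝ), ∃ η > (0 : ℝ),
      ∀ y ∈ C, η < ‖y‖ → ‖T x₀ - T y‖ ≤ ‖x₀ - y‖ - lam := by
  obtain ⟨r, ⟨-, hr1⟩, x₀, hx₀, η, hη, h⟩ := hC2
  refine ⟨x₀, hx₀, fun lam _ => ⟨max η (‖x₀‖ + lam / (1 - r)),
    lt_max_of_lt_left hη, fun y hy hlt => ?_⟩⟩
  obtain ⟨hηy, hy_large⟩ := max_lt_iff.mp hlt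
  have hdist : lam / (1 - r) ≤ ‖x₀ - y‖ := by
    linarith [norm_sub_norm_le y x₀, norm_sub_rev x₀ y]
  rw [div_le_iff₀ (sub_pos.mpr hr1)] at hdist
  linarith [h y hy hηy]
end

section
/- Let C be a nonempty closed convex subset of a Banach space E and let T be a nonexpansive mapping on C. If T satisfies condition (C4), then T satisfies condition (C3). -/
/-- Proposition 1 (part): (C4) ⇒ (C3) for a nonexpansive mapping on a nonempty
closed convex subset of a Banach space. -/
theorem c4_implies_c3
    {E : Type*} [NormedAddCommGroup E] [NormedSpace ℝ E] [CompleteSpace E]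
    (C : Set E) (hCne : C.Nonempty) (hCcl : IsClosed C) (hCcv : Convex ℝ C)
    (T : E → E) (hTC : Set.MapsTo T C C)
    (hTne : ∀ x ∈ C, ∀ y ∈ C, ‖T x - T y‖ ≤ ‖x - y‖)
    (hC4 : ∃ x₀ ∈ C, ∀ lam > (0 : ℝ), ∃ η > (0 : ℝ),
      ∀ y ∈ C, η < ‖y‖ → ‖T x₀ - T y‖ ≤ ‖x₀ - y‖ - lam) :
    ∀ lam > (0 : ℝ), ∀ x₁ ∈ C, ∃ η > (0 : ℝ),
      ∀ y ∈ C, η < ‖y‖ → ‖T x₁ - T y‖ ≤ ‖x₁ - y‖ - lam := by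
  intro lam hlam x₁ hx₁
  obtain ⟨x₀, hx₀, h⟩ := hC4
  obtain ⟨η, hη, hy⟩ := h (lam + 2 * ‖x₁ - x₀‖) (by positivity)
  refine ⟨η, hη, fun y hyC hηy => ?_⟩
  have hfar := hy y hyC hηy
  have hT := hTne x₁ hx₁ x₀ hx₀
  have htri := norm_sub_le_norm_sub_add_norm_sub (T x₁) (T x₀) (T y)
  have htri' := norm_sub_le_norm_sub_add_norm_sub x₀ x₁ y
  rw [norm_sub_rev x₀ x₁] at htri'
  linarith
end

section
/- Let C be a nonempty closed convex subset of a Banach space E and let T be a nonexpansive mapping on C. If T satisfies condition (C5), then T satisfies condition (C6). -/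
/-- A nonexpansive self-map of a closed convex set, averaged with a constant `u` of the set,
has a fixed point. -/
theorem exists_eq_smul_add_smul_of_nonexpansive
    {E : Type*} [NormedAddCommGroup E] [NormedSpace ℝ E] [CompleteSpace E]
    {C : Set E} (hCcl : IsClosed C) (hCcv : Convex ℝ C)
    {T : E → E} (hTC : Set.MapsTo T C C)
    (hTne : ∀ x ∈ C, ∀ y ∈ C, ‖T x - T y‖ ≤ ‖x - y‖)
    {u : E} (hu : u ∈ C) {s : ℝ} (hs0 : 0 < s) (hs1 : s ≤ 1) :
    ∃ x ∈ C, x = s • u + (1 - s) • T x := by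
  have : CompleteSpace C := hCcl.completeSpace_coe
  have : Nonempty C := ⟨⟨u, hu⟩⟩
  let f : C → C := fun x =>
    ⟨s • u + (1 - s) • T x, hCcv hu (hTC x.2) hs0.le (by linarith) (by ring)⟩
  have hf : ContractingWith (1 - s).toNNReal f := by
    refine ⟨by rw [Real.toNNReal_lt_one]; linarith, LipschitzWith.of_dist_le_mul fun x y => ?_⟩
    rw [Real.coe_toNNReal _ (by linarith), Subtype.dist_eq, Subtype.dist_eq, dist_eq_norm,
      dist_eq_norm]
    have h : (f x : E) - f y = (1 - s) • (T x - T y) := by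
      simp only [f]; module
    rw [h, norm_smul, Real.norm_of_nonneg (by linarith)]
    exact mul_le_mul_of_nonneg_left (hTne x x.2 y y.2) (by linarith)
  exact ⟨hf.fixedPoint, hf.fixedPoint.2, congrArg Subtype.val hf.fixedPoint_isFixedPt.symm⟩

/-- If `T u` and `T y` are closer than `u` and `y` by at least `lam` for all large `y`, then some
point is either moved by at most `lam`, or moved by at least `lam` less than `u` is. -/
theorem exists_norm_sub_le_or_le_sub
    {E : Type*} [NormedAddCommGroup E] [NormedSpace ℝ E] [CompleteSpace E]
    {C : Set E} (hCcl : IsClosed C) (hCcv : Convex ℝ C)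
    {T : E → E} (hTC : Set.MapsTo T C C)
    (hTne : ∀ x ∈ C, ∀ y ∈ C, ‖T x - T y‖ ≤ ‖x - y‖)
    {u : E} (hu : u ∈ C) {lam η : ℝ} (hlam : 0 < lam) (hη : 0 < η)
    (h : ∀ y ∈ C, η < ‖y‖ → ‖T u - T y‖ ≤ ‖u - y‖ - lam) :
    ∃ x ∈ C, ‖T x - x‖ ≤ lam ∨ ‖T x - x‖ ≤ ‖T u - u‖ - lam := by
  set K : ℝ := η + ‖u‖ + ‖T u - u‖ with hK
  have hKpos : 0 < K := by positivity
  have hs0 : 0 < lam / (K + lam) := by positivity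
  have hs1 : lam / (K + lam) ≤ 1 := by rw [div_le_one (by positivity)]; linarith
  have hsK : lam / (K + lam) * K ≤ lam := by
    rw [div_mul_eq_mul_div, div_le_iff₀ (by positivity)]; nlinarith
  generalize lam / (K + lam) = s at hs0 hs1 hsK
  obtain ⟨x, hx, hfix⟩ := exists_eq_smul_add_smul_of_nonexpansive hCcl hCcv hTC hTne hu hs0 hs1
  have hdisp : ‖T x - x‖ = s * ‖T x - u‖ := by
    have e : T x - x = s • (T x - u) := by
      nth_rewrite 2 [hfix]; module
    rw [e, norm_smul, Real.norm_of_nonneg hs0.le]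
  have hdist : ‖u - x‖ = (1 - s) * ‖T x - u‖ := by
    have e : u - x = (1 - s) • (u - T x) := by
      nth_rewrite 1 [hfix]; module
    rw [e, norm_smul, Real.norm_of_nonneg (by linarith), norm_sub_rev]
  have htri : ‖T x - u‖ ≤ ‖T u - T x‖ + ‖T u - u‖ := by
    rw [norm_sub_rev (T u) (T x)]
    exact norm_sub_le_norm_sub_add_norm_sub _ _ _
  refine ⟨x, hx, ?_⟩
  rcases le_or_gt ‖x‖ η with hle | hgt
  · left
    have hbound : ‖T x - u‖ ≤ K := by
      linarith [hTne u hu x hx, norm_sub_le u x]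
    rw [hdisp]
    exact (mul_le_mul_of_nonneg_left hbound hs0.le).trans hsK
  · right
    linarith [h x hx hgt]

/-- Proposition 1 (part): (C5) ⇒ (C6) for a nonexpansive mapping on a nonempty
closed convex subset of a Banach space. -/
theorem c5_implies_c6
    {E : Type*} [NormedAddCommGroup E] [NormedSpace ℝ E] [CompleteSpace E]
    (C : Set E) (hCne : C.Nonempty) (hCcl : IsClosed C) (hCcv : Convex ℝ C)
    (T : E → E) (hTC : Set.MapsTo T C C)
    (hTne : ∀ x ∈ C, ∀ y ∈ C, ‖T x - T y‖ ≤ ‖x - y‖)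
    (hC5 : ∃ lam > (0 : ℝ), ∀ x₁ ∈ C, ∃ η > (0 : ℝ),
      ∀ y ∈ C, η < ‖y‖ → ‖T x₁ - T y‖ ≤ ‖x₁ - y‖ - lam) :
    ∃ x₀ ∈ C, ∃ η > (0 : ℝ),
      ∀ y ∈ C, η < ‖y‖ → ‖T x₀ - T y‖ ≤ ‖x₀ - y‖ - ‖T x₀ - x₀‖ := by
  obtain ⟨lam, hlam, hC5⟩ := hC5
  suffices h : ∃ x ∈ C, ‖T x - x‖ ≤ lam by
    obtain ⟨x, hx, hle⟩ := h
    obtain ⟨η, hη, hxη⟩ := hC5 x hx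
    exact ⟨x, hx, η, hη, fun y hy hlt => (hxη y hy hlt).trans (by linarith)⟩
  have descent : ∀ n : ℕ, ∀ u ∈ C, ‖T u - u‖ ≤ n * lam → ∃ x ∈ C, ‖T x - x‖ ≤ lam := by
    intro n
    induction n with
    | zero =>
      intro u hu hn
      exact ⟨u, hu, hn.trans (by simpa using hlam.le)⟩
    | succ n ih =>
      intro u hu hn
      obtain ⟨η, hη, huη⟩ := hC5 u hu
      obtain ⟨x, hx, hle | hle⟩ :=
        exists_norm_sub_le_or_le_sub hCcl hCcv hTC hTne hu hlam hη huη
      · exact ⟨x, hx, hle⟩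
      · refine ih x hx ?_
        push_cast at hn
        linarith
  obtain ⟨u, hu⟩ := hCne
  obtain ⟨n, hn⟩ := exists_nat_ge (‖T u - u‖ / lam)
  exact descent n u hu ((div_le_iff₀ hlam).1 hn)
end

section
/- Let C be a nonempty closed convex subset of a Banach space E, let T be a nonexpansive mapping on C, and suppose that T satisfies condition (C5), i.e., there exists λ > 0 such that for each x₁ ∈ C there exists η > 0 satisfying ‖Tx₁ − Ty‖ ≤ ‖x₁ − y‖ − λ for all y ∈ C with ‖y‖ > η. Then inf { ‖Tx − x‖ : x ∈ C } = 0. -/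
/-- For a nonexpansive self-map `T` of a nonempty closed convex set and an anchor `u`, the
implicit equation `T x - x = s • (x - u)` is solvable for every `s > 0`. -/
theorem exists_sub_eq_smul_sub_of_nonexpansive
    {E : Type*} [NormedAddCommGroup E] [NormedSpace ℝ E] [CompleteSpace E]
    {C : Set E} (hCcl : IsClosed C) (hCcv : Convex ℝ C)
    {T : E → E} (hTC : Set.MapsTo T C C)
    (hTne : ∀ x ∈ C, ∀ y ∈ C, ‖T x - T y‖ ≤ ‖x - y‖)
    {u : E} (hu : u ∈ C) {s : ℝ} (hs : 0 < s) :
    ∃ x ∈ C, T x - x = s • (x - u) := by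
  have hs1 : 0 < 1 + s := by linarith
  have hK : 0 ≤ (1 + s)⁻¹ := by positivity
  have hmem (x : C) : (1 + s)⁻¹ • T x + (s * (1 + s)⁻¹) • u ∈ C :=
    hCcv (hTC x.2) hu hK (by positivity) (by field_simp)
  let f : C → C := fun x => ⟨(1 + s)⁻¹ • T x + (s * (1 + s)⁻¹) • u, hmem x⟩
  have hf : ContractingWith (Real.toNNReal (1 + s)⁻¹) f := by
    refine ⟨?_, LipschitzWith.of_dist_le_mul fun x y => ?_⟩
    · rw [Real.toNNReal_lt_one]
      exact inv_lt_one_of_one_lt₀ (by linarith)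
    · rw [Subtype.dist_eq, Subtype.dist_eq, dist_eq_norm, dist_eq_norm]
      simp only [f, Real.coe_toNNReal _ hK, add_sub_add_right_eq_sub, ← smul_sub, norm_smul,
        Real.norm_of_nonneg hK]
      exact mul_le_mul_of_nonneg_left (hTne x x.2 y y.2) hK
  have : CompleteSpace C := hCcl.completeSpace_coe
  have : Nonempty C := ⟨⟨u, hu⟩⟩
  obtain ⟨x, hx⟩ : ∃ x, f x = x := ⟨_, hf.fixedPoint_isFixedPt⟩
  refine ⟨x, x.2, ?_⟩
  have hx' : (1 + s)⁻¹ • T x + (s * (1 + s)⁻¹) • u = (x : E) := congrArg Subtype.val hx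
  have hsolve : T x + s • u = (1 + s) • (x : E) := by
    rw [← hx', smul_add, smul_smul, smul_smul, mul_inv_cancel₀ hs1.ne', one_smul, hx']
    congr 2
    field_simp
  rw [eq_sub_of_add_eq hsolve]
  module

/-- If `T` shrinks distances to `u` by `lam` outside the ball of radius `η`, then some point has
displacement at most `ε` or at most `‖T u - u‖ - lam`. -/
theorem exists_displacement_le_max
    {E : Type*} [NormedAddCommGroup E] [NormedSpace ℝ E] [CompleteSpace E]
    {C : Set E} (hCcl : IsClosed C) (hCcv : Convex ℝ C)
    {T : E → E} (hTC : Set.MapsTo T C C)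
    (hTne : ∀ x ∈ C, ∀ y ∈ C, ‖T x - T y‖ ≤ ‖x - y‖)
    {u : E} (hu : u ∈ C) {lam η ε : ℝ} (hη : 0 < η) (hε : 0 < ε)
    (hfar : ∀ y ∈ C, η < ‖y‖ → ‖T u - T y‖ ≤ ‖u - y‖ - lam) :
    ∃ x ∈ C, ‖T x - x‖ ≤ max ε (‖T u - u‖ - lam) := by
  have hpos : 0 < η + ‖u‖ := by positivity
  have hs : 0 < ε / (η + ‖u‖) := by positivity
  obtain ⟨x, hxC, hx⟩ := exists_sub_eq_smul_sub_of_nonexpansive hCcl hCcv hTC hTne hu hs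
  refine ⟨x, hxC, ?_⟩
  have hdisp : ‖T x - x‖ = ε / (η + ‖u‖) * ‖x - u‖ := by
    rw [hx, norm_smul, Real.norm_of_nonneg hs.le]
  rcases le_or_gt ‖x‖ η with hle | hlt
  · refine le_max_of_le_left ?_
    calc ‖T x - x‖ = ε / (η + ‖u‖) * ‖x - u‖ := hdisp
      _ ≤ ε / (η + ‖u‖) * (η + ‖u‖) := by
        gcongr
        linarith [norm_sub_le x u]
      _ = ε := div_mul_cancel₀ _ hpos.ne'
  · refine le_max_of_le_right ?_
    have hcol : ‖T x - u‖ = ‖T x - x‖ + ‖x - u‖ := by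
      have : T x - u = (ε / (η + ‖u‖) + 1) • (x - u) := by
        rw [add_smul, one_smul, ← hx, sub_add_sub_cancel]
      rw [this, norm_smul, Real.norm_of_nonneg (by positivity), hdisp]
      ring
    have htri := norm_sub_le_norm_sub_add_norm_sub (T x) (T u) u
    have hcontr := hfar x hxC hlt
    rw [norm_sub_rev (T u), norm_sub_rev u] at hcontr
    linarith

/-- If a nonexpansive mapping `T` on a nonempty closed convex subset `C` of a Banach
space satisfies condition (C5), then `inf { ‖Tx − x‖ : x ∈ C } = 0`. -/
theorem c5_implies_inf_displacement_zero
    {E : Type*} [NormedAddCommGroup E] [NormedSpace ℝ E] [CompleteSpace E]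
    (C : Set E) (hCne : C.Nonempty) (hCcl : IsClosed C) (hCcv : Convex ℝ C)
    (T : E → E) (hTC : Set.MapsTo T C C)
    (hTne : ∀ x ∈ C, ∀ y ∈ C, ‖T x - T y‖ ≤ ‖x - y‖)
    (hC5 : ∃ lam > (0 : ℝ), ∀ x₁ ∈ C, ∃ η > (0 : ℝ),
      ∀ y ∈ C, η < ‖y‖ → ‖T x₁ - T y‖ ≤ ‖x₁ - y‖ - lam) :
    sInf ((fun x => ‖T x - x‖) '' C) = 0 := by
  obtain ⟨lam, hlam, hC5⟩ := hC5
  set d := sInf ((fun x => ‖T x - x‖) '' C)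
  have hnonneg : 0 ≤ d := by
    refine Real.sInf_nonneg ?_
    rintro _ ⟨x, -, rfl⟩
    exact norm_nonneg _
  have hbdd : BddBelow ((fun x => ‖T x - x‖) '' C) := by
    refine ⟨0, ?_⟩
    rintro _ ⟨x, -, rfl⟩
    exact norm_nonneg _
  by_contra hne
  have hdpos : 0 < d := lt_of_le_of_ne hnonneg (Ne.symm hne)
  obtain ⟨_, ⟨u, hu, rfl⟩, hlt⟩ :=
    exists_lt_of_csInf_lt (hCne.image _) (show d < d + lam by linarith)
  obtain ⟨η, hη, hfar⟩ := hC5 u hu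
  obtain ⟨x, hx, hle⟩ :=
    exists_displacement_le_max hCcl hCcv hTC hTne hu hη (half_pos hdpos) hfar
  have hdx : d ≤ ‖T x - x‖ := csInf_le hbdd ⟨x, hx, rfl⟩
  have hmax : max (d / 2) (‖T u - u‖ - lam) < d :=
    max_lt (half_lt_self hdpos) (by linarith)
  linarith
end

section
/- Let C be a nonempty unbounded closed convex subset of a Banach space E and let T be a nonexpansive mapping on C. Then the condition that for every x₁ ∈ C the limsup of ‖Tx₁ − Ty‖ / ‖x₁ − y‖, taken over y ∈ C as ‖y‖ → ∞, is strictly less than 1, holds if and only if T satisfies condition (C1). -/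
open Filter

/-- On a nonempty unbounded closed convex subset of a Banach space, a nonexpansive
mapping satisfies `limsup_{y ∈ C, ‖y‖ → ∞} ‖Tx₁ − Ty‖ / ‖x₁ − y‖ < 1` for every
`x₁ ∈ C` iff it satisfies (C1). -/
theorem limsup_lt_one_forall_iff_c1
    {E : Type*} [NormedAddCommGroup E] [NormedSpace ℝ E] [CompleteSpace E]
    (C : Set E) (hCne : C.Nonempty) (hCub : ¬ Bornology.IsBounded C)
    (hCcl : IsClosed C) (hCcv : Convex ℝ C)
    (T : E → E) (hTC : Set.MapsTo T C C)
    (hTne : ∀ x ∈ C, ∀ y ∈ C, ‖T x - T y‖ ≤ ‖x - y‖) :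
    (∀ x₁ ∈ C, Filter.limsup (fun y => ‖T x₁ - T y‖ / ‖x₁ - y‖)
        ((Filter.comap norm Filter.atTop) ⊓ Filter.principal C) < 1) ↔
      (∃ r ∈ Set.Ioo (0 : ℝ) 1, ∀ x₁ ∈ C, ∃ η > (0 : ℝ),
        ∀ y ∈ C, η < ‖y‖ → ‖T x₁ - T y‖ ≤ r * ‖x₁ - y‖) := by
  have eventually_iff (p : E → Prop) :
      (∀ᶠ y in comap norm atTop ⊓ 𝓟 C, p y) ↔ ∃ η > (0 : ℝ), ∀ y ∈ C, η < ‖y‖ → p y := by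
    rw [eventually_inf_principal, ((atTop_basis_Ioi' (0 : ℝ)).comap norm).eventually_iff]
    exact exists_congr fun η => and_congr_right fun _ =>
      ⟨fun h y hy hη => h hη hy, fun h y hη hy => h y hy hη⟩
  have : (comap (norm : E → ℝ) atTop ⊓ 𝓟 C).NeBot := by
    rw [neBot_iff]
    intro h
    rw [comap_norm_atTop, ← disjoint_iff, disjoint_principal_right] at h
    exact hCub (Bornology.isBounded_def.2 h)
  constructor
  · intro h
    obtain ⟨x₀, hx₀⟩ := hCne
    obtain ⟨s, hs, hs1⟩ := exists_between (max_lt (h x₀ hx₀) one_pos)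
    obtain ⟨hls, hs0⟩ := max_lt_iff.1 hs
    have hbdd : IsBoundedUnder (· ≤ ·) (comap norm atTop ⊓ 𝓟 C)
        (fun y => ‖T x₀ - T y‖ / ‖x₀ - y‖) :=
      isBoundedUnder_of_eventually_le (a := 1) <| (eventually_iff _).2
        ⟨1, one_pos, fun y hy _ => div_le_one_of_le₀ (hTne x₀ hx₀ y hy) (norm_nonneg _)⟩
    obtain ⟨η, hη, hlt⟩ := (eventually_iff _).1 (eventually_lt_of_limsup_lt hls hbdd)
    refine ⟨(1 + s) / 2, ⟨by linarith, by linarith⟩, fun x₁ hx₁ => ?_⟩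
    refine ⟨max (max η ‖x₀‖) (‖x₁‖ + 4 * ‖x₁ - x₀‖ / (1 - s)),
      lt_max_of_lt_left (lt_max_of_lt_left hη), fun y hy hyη => ?_⟩
    obtain ⟨hy₀, hy₁⟩ := max_lt_iff.1 hyη
    obtain ⟨hyη, hyx₀⟩ := max_lt_iff.1 hy₀
    have hpos : 0 < ‖x₀ - y‖ := by
      rw [norm_pos_iff, sub_ne_zero]
      rintro rfl
      exact lt_irrefl _ hyx₀
    have hx₀y : ‖T x₀ - T y‖ ≤ s * ‖x₀ - y‖ := ((div_lt_iff₀ hpos).1 (hlt y hy hyη)).le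
    have hfar : 4 * ‖x₁ - x₀‖ ≤ ‖x₁ - y‖ * (1 - s) := by
      rw [← div_le_iff₀ (by linarith)]
      linarith [norm_sub_norm_le y x₁, norm_sub_rev y x₁]
    have htri : s * ‖x₀ - y‖ ≤ s * (‖x₁ - x₀‖ + ‖x₁ - y‖) := by
      gcongr
      rw [norm_sub_rev x₁ x₀]
      exact norm_sub_le_norm_sub_add_norm_sub x₀ x₁ y
    have hsD : s * ‖x₁ - x₀‖ ≤ ‖x₁ - x₀‖ := mul_le_of_le_one_left (norm_nonneg _) hs1.le
    linarith [norm_sub_le_norm_sub_add_norm_sub (T x₁) (T x₀) (T y), hTne x₁ hx₁ x₀ hx₀]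
  · rintro ⟨r, ⟨hr0, hr1⟩, h⟩ x₁ hx₁
    refine (limsup_le_of_le ?_ ?_).trans_lt hr1
    · exact (isBoundedUnder_of_eventually_ge (a := 0) <|
        Eventually.of_forall fun y => by positivity).isCoboundedUnder_le
    · obtain ⟨η, hη, hle⟩ := h x₁ hx₁
      exact (eventually_iff _).2 ⟨η, hη, fun y hy hyη =>
        div_le_of_le_mul₀ (norm_nonneg _) hr0.le (hle y hy hyη)⟩
end

section
/- Let C be a closed convex subset of a Banach space E and let T be a nonexpansive mapping on C. Suppose there exist x₀ ∈ C and η > 0 such that ‖Tx₀ − Ty‖ ≤ ‖x₀ − y‖ − ‖Tx₀ − x₀‖ for all y ∈ C with ‖y‖ > η. Then there exists ρ > 0 such that T maps the set D = { y ∈ C : ‖y − x₀‖ ≤ ρ } into itself. -/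
/-- Lemma 1: if a nonexpansive mapping `T` on a closed convex subset `C` of a Banach
space satisfies (C6), then some closed ball of `C` around `x₀` is invariant under `T`. -/
theorem invariant_ball_of_c6
    {E : Type*} [NormedAddCommGroup E] [NormedSpace ℝ E] [CompleteSpace E]
    (C : Set E) (hCcl : IsClosed C) (hCcv : Convex ℝ C)
    (T : E → E) (hTC : Set.MapsTo T C C)
    (hTne : ∀ x ∈ C, ∀ y ∈ C, ‖T x - T y‖ ≤ ‖x - y‖)
    (x₀ : E) (hx₀ : x₀ ∈ C) (η : ℝ) (hη : 0 < η)
    (hC6 : ∀ y ∈ C, η < ‖y‖ → ‖T x₀ - T y‖ ≤ ‖x₀ - y‖ - ‖T x₀ - x₀‖) :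
    ∃ ρ > (0 : ℝ),
      Set.MapsTo T {y ∈ C | ‖y - x₀‖ ≤ ρ} {y ∈ C | ‖y - x₀‖ ≤ ρ} := by
  refine ⟨η + ‖x₀‖ + ‖T x₀ - x₀‖, by positivity, fun y ⟨hyC, hyρ⟩ => ⟨hTC hyC, ?_⟩⟩
  have h_triangle : ‖T y - x₀‖ ≤ ‖T x₀ - T y‖ + ‖T x₀ - x₀‖ := by
    rw [norm_sub_rev (T x₀) (T y)]
    exact norm_sub_le_norm_sub_add_norm_sub (T y) (T x₀) x₀
  rcases lt_or_ge η ‖y‖ with hy | hy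
  · have h_far := hC6 y hyC hy
    rw [norm_sub_rev x₀ y] at h_far
    linarith
  · have h_near := hTne x₀ hx₀ y hyC
    linarith [norm_sub_le x₀ y]
end

section
/- Let C be a nonempty closed convex subset of a Banach space E and assume that C has the fixed point property for nonexpansive mappings (FPP). Let T be a nonexpansive mapping on C. Then T has a fixed point in C if and only if T satisfies condition (C6). -/
/-- Proposition 3: if a nonempty closed convex subset `C` of a Banach space has the
fixed point property for nonexpansive mappings, then a nonexpansive mapping `T` on `C`
has a fixed point iff it satisfies (C6). -/
theorem fixedPoint_iff_c6_of_fpp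
    {E : Type*} [NormedAddCommGroup E] [NormedSpace ℝ E] [CompleteSpace E]
    (C : Set E) (hCne : C.Nonempty) (hCcl : IsClosed C) (hCcv : Convex ℝ C)
    (hFPP : ∀ D : Set E, D ⊆ C → D.Nonempty → Bornology.IsBounded D → IsClosed D →
      Convex ℝ D → ∀ S : E → E, Set.MapsTo S D D →
      (∀ x ∈ D, ∀ y ∈ D, ‖S x - S y‖ ≤ ‖x - y‖) → ∃ z ∈ D, S z = z)
    (T : E → E) (hTC : Set.MapsTo T C C)
    (hTne : ∀ x ∈ C, ∀ y ∈ C, ‖T x - T y‖ ≤ ‖x - y‖) :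
    (∃ z ∈ C, T z = z) ↔
      (∃ x₀ ∈ C, ∃ η > (0 : ℝ),
        ∀ y ∈ C, η < ‖y‖ → ‖T x₀ - T y‖ ≤ ‖x₀ - y‖ - ‖T x₀ - x₀‖) := by
  constructor
  · rintro ⟨z, hz, hTz⟩
    refine ⟨z, hz, 1, one_pos, fun y hy _ => ?_⟩
    have h := hTne z hz y hy
    rw [hTz] at h ⊢
    simpa using h
  · rintro ⟨x₀, hx₀, η, hη, h⟩
    set R := η + ‖x₀‖ + ‖T x₀ - x₀‖ with hR
    have hR₀ : 0 ≤ R := by positivity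
    obtain ⟨z, hz, hTz⟩ := hFPP (C ∩ Metric.closedBall x₀ R) Set.inter_subset_left
      ⟨x₀, hx₀, Metric.mem_closedBall_self hR₀⟩
      (Metric.isBounded_closedBall.subset Set.inter_subset_right)
      (hCcl.inter Metric.isClosed_closedBall) (hCcv.inter (convex_closedBall x₀ R)) T
      (by
        rintro y ⟨hy, hyR⟩
        refine ⟨hTC hy, ?_⟩
        rw [mem_closedBall_iff_norm'] at hyR ⊢
        have htri : ‖x₀ - T y‖ ≤ ‖T x₀ - x₀‖ + ‖T x₀ - T y‖ := by
          rw [norm_sub_rev (T x₀) x₀]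
          exact norm_sub_le_norm_sub_add_norm_sub x₀ (T x₀) (T y)
        rcases lt_or_ge η ‖y‖ with hlt | hle
        · linarith [h y hy hlt]
        · linarith [hTne x₀ hx₀ y hy, norm_sub_le x₀ y])
      (fun x hx y hy => hTne x hx.1 y hy.1)
    exact ⟨z, hz.1, hTz⟩
end

section
/- Let C be a nonempty closed convex subset of a Banach space E. Assume that C is locally weakly compact and has the weak fixed point property for nonexpansive mappings (WFPP). Let T be a nonexpansive mapping on C. Then T has a fixed point in C if and only if T satisfies condition (C6). -/
/-- Proposition 4: if a nonempty closed convex subset `C` of a Banach space is locally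
weakly compact and has the weak fixed point property for nonexpansive mappings, then a
nonexpansive mapping `T` on `C` has a fixed point iff it satisfies (C6). -/
theorem fixedPoint_iff_c6_of_wfpp
    {E : Type*} [NormedAddCommGroup E] [NormedSpace ℝ E] [CompleteSpace E]
    (C : Set E) (hCne : C.Nonempty) (hCcl : IsClosed C) (hCcv : Convex ℝ C)
    (hLWC : ∀ D : Set E, D ⊆ C → Bornology.IsBounded D → IsClosed D → Convex ℝ D →
      IsCompact (toWeakSpace ℝ E '' D))
    (hWFPP : ∀ D : Set E, D ⊆ C → D.Nonempty → IsCompact (toWeakSpace ℝ E '' D) →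
      Convex ℝ D → ∀ S : E → E, Set.MapsTo S D D →
      (∀ x ∈ D, ∀ y ∈ D, ‖S x - S y‖ ≤ ‖x - y‖) → ∃ z ∈ D, S z = z)
    (T : E → E) (hTC : Set.MapsTo T C C)
    (hTne : ∀ x ∈ C, ∀ y ∈ C, ‖T x - T y‖ ≤ ‖x - y‖) :
    (∃ z ∈ C, T z = z) ↔
      (∃ x₀ ∈ C, ∃ η > (0 : ℝ),
        ∀ y ∈ C, η < ‖y‖ → ‖T x₀ - T y‖ ≤ ‖x₀ - y‖ - ‖T x₀ - x₀‖) := by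
  constructor
  · rintro ⟨z, hz, hfix⟩
    refine ⟨z, hz, 1, one_pos, fun y hy _ => ?_⟩
    simpa [hfix] using hTne z hz y hy
  · rintro ⟨x₀, hx₀, η, hη, hC6⟩
    -- `T` maps the part of `C` in a large ball around `x₀` into itself.
    set R : ℝ := η + ‖x₀‖ + ‖T x₀ - x₀‖ with hR
    have hR0 : 0 ≤ R := by positivity
    have hDcv : Convex ℝ (C ∩ Metric.closedBall x₀ R) := hCcv.inter (convex_closedBall x₀ R)
    have hDcpt : IsCompact (toWeakSpace ℝ E '' (C ∩ Metric.closedBall x₀ R)) :=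
      hLWC _ Set.inter_subset_left (Metric.isBounded_closedBall.subset Set.inter_subset_right)
        (hCcl.inter Metric.isClosed_closedBall) hDcv
    have hmaps : Set.MapsTo T (C ∩ Metric.closedBall x₀ R) (C ∩ Metric.closedBall x₀ R) := by
      rintro y ⟨hyC, hyR⟩
      refine ⟨hTC hyC, ?_⟩
      rw [mem_closedBall_iff_norm'] at hyR ⊢
      have htri : ‖x₀ - T y‖ ≤ ‖T x₀ - x₀‖ + ‖T x₀ - T y‖ := by
        rw [norm_sub_rev (T x₀) x₀]
        exact norm_sub_le_norm_sub_add_norm_sub _ _ _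
      rcases lt_or_ge η ‖y‖ with hy | hy
      · linarith [hC6 y hyC hy]
      · linarith [hTne x₀ hx₀ y hyC, norm_sub_le x₀ y]
    obtain ⟨z, hz, hfix⟩ := hWFPP _ Set.inter_subset_left
      ⟨x₀, hx₀, Metric.mem_closedBall_self hR0⟩ hDcpt hDcv T hmaps
      fun x hx y hy => hTne x hx.1 y hy.1
    exact ⟨z, hz.1, hfix⟩
end

section
/- Let C be a nonempty unbounded closed convex subset of a Banach space E, assume C has the fixed point property for nonexpansive mappings (FPP), and let T be a nonexpansive mapping on C which is asymptotically contractive. Then T has a fixed point. -/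
open Filter

/-- Theorem 1 (i): a nonexpansive, asymptotically contractive mapping on a nonempty
unbounded closed convex subset of a Banach space with the fixed point property for
nonexpansive mappings has a fixed point. -/
theorem fixedPoint_of_asymptotically_contractive_fpp
    {E : Type*} [NormedAddCommGroup E] [NormedSpace ℝ E] [CompleteSpace E]
    (C : Set E) (hCne : C.Nonempty) (hCub : ¬ Bornology.IsBounded C)
    (hCcl : IsClosed C) (hCcv : Convex ℝ C)
    (hFPP : ∀ D : Set E, D ⊆ C → D.Nonempty → Bornology.IsBounded D → IsClosed D →
      Convex ℝ D → ∀ S : E → E, Set.MapsTo S D D →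
      (∀ x ∈ D, ∀ y ∈ D, ‖S x - S y‖ ≤ ‖x - y‖) → ∃ z ∈ D, S z = z)
    (T : E → E) (hTC : Set.MapsTo T C C)
    (hTne : ∀ x ∈ C, ∀ y ∈ C, ‖T x - T y‖ ≤ ‖x - y‖)
    (hAC : ∃ x₀ ∈ C, Filter.limsup (fun y => ‖T x₀ - T y‖ / ‖x₀ - y‖)
      ((Filter.comap norm Filter.atTop) ⊓ Filter.principal C) < 1) :
    ∃ z ∈ C, T z = z := by
  obtain ⟨x₀, hx₀, hlim⟩ := hAC
  obtain ⟨c, hc, hc1⟩ := exists_between (max_lt hlim one_pos)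
  have hc0 : 0 < c := (le_max_right _ _).trans_lt hc
  have hbdd : IsBoundedUnder (· ≤ ·) (comap norm atTop ⊓ 𝓟 C)
      (fun y => ‖T x₀ - T y‖ / ‖x₀ - y‖) := by
    refine isBoundedUnder_of_eventually_le (a := 1) ?_
    filter_upwards [mem_inf_of_right (mem_principal_self C)] with y hy
    exact div_le_one_of_le₀ (hTne x₀ hx₀ y hy) (norm_nonneg _)
  have hev := eventually_lt_of_limsup_lt ((le_max_left _ _).trans_lt hc) hbdd
  rw [eventually_inf_principal, eventually_comap, eventually_atTop] at hev
  obtain ⟨R, hR⟩ := hev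
  set a := ‖T x₀ - x₀‖
  have ha : 0 ≤ a := norm_nonneg _
  -- Any large enough ball around `x₀` meets `C` in a `T`-invariant set.
  set r := max (a / (1 - c)) (‖x₀‖ + R + a)
  have hra : c * r + a ≤ r := by
    have h := (div_le_iff₀ (sub_pos.2 hc1)).1 (le_max_left (a / (1 - c)) (‖x₀‖ + R + a))
    linarith
  have hr0 : 0 ≤ r := (div_nonneg ha (sub_pos.2 hc1).le).trans (le_max_left _ _)
  have hmaps : Set.MapsTo T (C ∩ Metric.closedBall x₀ r) (C ∩ Metric.closedBall x₀ r) := by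
    rintro y ⟨hyC, hyr⟩
    refine ⟨hTC hyC, ?_⟩
    rw [mem_closedBall_iff_norm'] at hyr ⊢
    have htri : ‖x₀ - T y‖ ≤ a + ‖T x₀ - T y‖ := by
      simpa only [a, norm_sub_rev (T x₀) x₀] using norm_sub_le_norm_sub_add_norm_sub x₀ (T x₀) (T y)
    have hne := hTne x₀ hx₀ y hyC
    rcases le_total R ‖y‖ with hy | hy
    · have hcontr : ‖T x₀ - T y‖ ≤ c * ‖x₀ - y‖ := by
        rcases (norm_nonneg (x₀ - y)).eq_or_lt with h0 | hpos
        · rwa [← h0, mul_zero, h0]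
        · exact ((div_lt_iff₀ hpos).1 (hR _ hy y rfl hyC)).le
      have := mul_le_mul_of_nonneg_left hyr hc0.le
      linarith
    · have := norm_sub_le x₀ y
      have : ‖x₀‖ + R + a ≤ r := le_max_right _ _
      linarith
  obtain ⟨z, hz, hTz⟩ := hFPP (C ∩ Metric.closedBall x₀ r) Set.inter_subset_left
    ⟨x₀, hx₀, Metric.mem_closedBall_self hr0⟩
    (Metric.isBounded_closedBall.subset Set.inter_subset_right)
    (hCcl.inter Metric.isClosed_closedBall) (hCcv.inter (convex_closedBall x₀ r)) T hmaps
    (fun x hx y hy => hTne x hx.1 y hy.1)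
  exact ⟨z, hz.1, hTz⟩
end

section
/- Let C be a nonempty unbounded closed convex subset of a Banach space E. Assume C is locally weakly compact and has the weak fixed point property for nonexpansive mappings (WFPP). Let T be a nonexpansive mapping on C which is asymptotically contractive. Then T has a fixed point. -/
open Filter

/-- Theorem 1 (ii): a nonexpansive, asymptotically contractive mapping on a nonempty
unbounded closed convex subset of a Banach space which is locally weakly compact and
has the weak fixed point property for nonexpansive mappings has a fixed point. -/
theorem fixedPoint_of_asymptotically_contractive_wfpp
    {E : Type*} [NormedAddCommGroup E] [NormedSpace ℝ E] [CompleteSpace E]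
    (C : Set E) (hCne : C.Nonempty) (hCub : ¬ Bornology.IsBounded C)
    (hCcl : IsClosed C) (hCcv : Convex ℝ C)
    (hLWC : ∀ D : Set E, D ⊆ C → Bornology.IsBounded D → IsClosed D → Convex ℝ D →
      IsCompact (toWeakSpace ℝ E '' D))
    (hWFPP : ∀ D : Set E, D ⊆ C → D.Nonempty → IsCompact (toWeakSpace ℝ E '' D) →
      Convex ℝ D → ∀ S : E → E, Set.MapsTo S D D →
      (∀ x ∈ D, ∀ y ∈ D, ‖S x - S y‖ ≤ ‖x - y‖) → ∃ z ∈ D, S z = z)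
    (T : E → E) (hTC : Set.MapsTo T C C)
    (hTne : ∀ x ∈ C, ∀ y ∈ C, ‖T x - T y‖ ≤ ‖x - y‖)
    (hAC : ∃ x₀ ∈ C, Filter.limsup (fun y => ‖T x₀ - T y‖ / ‖x₀ - y‖)
      ((Filter.comap norm Filter.atTop) ⊓ Filter.principal C) < 1) :
    ∃ z ∈ C, T z = z := by
  obtain ⟨x₀, hx₀, hlim⟩ := hAC
  obtain ⟨c, hc, hc1⟩ := exists_between (max_lt hlim zero_lt_one)
  obtain ⟨hlc, hc0⟩ := max_lt_iff.mp hc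
  have hbdd : IsBoundedUnder (· ≤ ·) (comap norm atTop ⊓ principal C)
      (fun y => ‖T x₀ - T y‖ / ‖x₀ - y‖) :=
    isBoundedUnder_of_eventually_le (a := 1) <| by
      filter_upwards [mem_inf_of_right (mem_principal_self C)] with y hy
      exact div_le_one_of_le₀ (hTne x₀ hx₀ y hy) (norm_nonneg _)
  have hev := eventually_lt_of_limsup_lt hlc hbdd
  rw [eventually_inf_principal, eventually_comap, eventually_atTop] at hev
  obtain ⟨N, hN⟩ := hev
  -- The ball of radius `r` about `x₀` meets `C` in a `T`-invariant set.
  set d := ‖x₀ - T x₀‖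
  set r := max (N + ‖x₀‖ + d) (d / (1 - c))
  have hr₁ : N + ‖x₀‖ + d ≤ r := le_max_left _ _
  have hr₂ : d ≤ r * (1 - c) := (div_le_iff₀ (by linarith)).mp (le_max_right _ _)
  have hr₀ : 0 ≤ r := (div_nonneg (norm_nonneg _) (by linarith)).trans (le_max_right _ _)
  set D := C ∩ Metric.closedBall x₀ r
  have hDC : D ⊆ C := Set.inter_subset_left
  have hDcv : Convex ℝ D := hCcv.inter (convex_closedBall x₀ r)
  have hDT : Set.MapsTo T D D := by
    rintro y ⟨hy, hyr⟩
    refine ⟨hTC hy, ?_⟩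
    rw [mem_closedBall_iff_norm'] at hyr ⊢
    have htri : ‖x₀ - T y‖ ≤ d + ‖T x₀ - T y‖ :=
      norm_sub_le_norm_sub_add_norm_sub _ _ _
    have hne := hTne x₀ hx₀ y hy
    rcases le_total N ‖y‖ with h | h
    · have hle : ‖T x₀ - T y‖ ≤ c * ‖x₀ - y‖ := by
        rcases (norm_nonneg (x₀ - y)).eq_or_lt with h0 | h0
        · rwa [← h0, mul_zero, h0]
        · exact ((div_lt_iff₀ h0).mp (hN ‖y‖ h y rfl hy)).le
      have := mul_le_mul_of_nonneg_left hyr hc0.le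
      linarith
    · have := norm_sub_le x₀ y
      linarith
  obtain ⟨z, hz, hTz⟩ := hWFPP D hDC ⟨x₀, hx₀, Metric.mem_closedBall_self hr₀⟩
    (hLWC D hDC (Metric.isBounded_closedBall.subset Set.inter_subset_right)
      (hCcl.inter Metric.isClosed_closedBall) hDcv)
    hDcv T hDT (fun x hx y hy => hTne x (hDC hx) y (hDC hy))
  exact ⟨z, hDC hz, hTz⟩
end

section
/- Let C = [1, ∞) ⊂ ℝ and define T : C → C by Tx = x − log x. Then T is a nonexpansive mapping on C, T satisfies condition (C3), and T does not satisfy condition (C1). -/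
/-- On `[1, ∞)` the logarithm is 1-Lipschitz. -/
lemma log_sub_log_le_sub {x y : ℝ} (hx : 1 ≤ x) (hxy : x ≤ y) :
    Real.log y - Real.log x ≤ y - x := by
  have hx0 : 0 < x := by linarith
  have hy0 : 0 < y := by linarith
  rw [← Real.log_div hy0.ne' hx0.ne']
  calc Real.log (y / x) ≤ y / x - 1 := Real.log_le_sub_one_of_pos (div_pos hy0 hx0)
    _ = (y - x) / x := by field_simp
    _ ≤ y - x := div_le_self (by linarith) hx

lemma abs_sub_log_sub_sub_log {x y : ℝ} (hx : 1 ≤ x) (hxy : x ≤ y) :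
    |(x - Real.log x) - (y - Real.log y)| = (y - x) - (Real.log y - Real.log x) := by
  have h := log_sub_log_le_sub hx hxy
  rw [abs_of_nonpos (by linarith)]
  ring

lemma abs_sub_log_sub_sub_log_le {x y : ℝ} (hx : 1 ≤ x) (hxy : x ≤ y) :
    |(x - Real.log x) - (y - Real.log y)| ≤ |x - y| := by
  have h := Real.log_le_log (by linarith) hxy
  rw [abs_sub_log_sub_sub_log hx hxy, abs_sub_comm x y, abs_of_nonneg (sub_nonneg.2 hxy)]
  linarith

/-- Example 1: on `C = [1, ∞) ⊆ ℝ`, the map `T x = x − log x` is nonexpansive,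
satisfies (C3), and does not satisfy (C1). -/
theorem example_log_c3_not_c1 :
    letI C : Set ℝ := Set.Ici 1
    letI T : ℝ → ℝ := fun x => x - Real.log x
    Set.MapsTo T C C ∧
    (∀ x ∈ C, ∀ y ∈ C, ‖T x - T y‖ ≤ ‖x - y‖) ∧
    (∀ lam > (0 : ℝ), ∀ x₁ ∈ C, ∃ η > (0 : ℝ),
      ∀ y ∈ C, η < ‖y‖ → ‖T x₁ - T y‖ ≤ ‖x₁ - y‖ - lam) ∧
    ¬ (∃ r ∈ Set.Ioo (0 : ℝ) 1, ∀ x₁ ∈ C, ∃ η > (0 : ℝ),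
      ∀ y ∈ C, η < ‖y‖ → ‖T x₁ - T y‖ ≤ r * ‖x₁ - y‖) := by
  simp only [Set.mem_Ici, Real.norm_eq_abs]
  refine ⟨fun x hx => ?_, fun x hx y hy => ?_, fun lam hlam x hx => ?_, ?_⟩
  · have h := Real.log_le_sub_one_of_pos (lt_of_lt_of_le one_pos (Set.mem_Ici.1 hx))
    simp only [Set.mem_Ici]
    linarith
  · rcases le_total x y with h | h
    · exact abs_sub_log_sub_sub_log_le hx h
    · rw [abs_sub_comm, abs_sub_comm x y]
      exact abs_sub_log_sub_sub_log_le hy h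
  · have hx0 : 0 < x := by linarith
    have hpos : 0 < x * Real.exp lam := by positivity
    refine ⟨x * Real.exp lam, hpos, fun y hy hlt => ?_⟩
    rw [abs_of_nonneg (by linarith)] at hlt
    have hxy : x ≤ y :=
      (le_mul_of_one_le_right hx0.le (Real.one_le_exp hlam.le)).trans hlt.le
    have hlog := Real.log_le_log hpos hlt.le
    rw [Real.log_mul hx0.ne' (Real.exp_pos lam).ne', Real.log_exp] at hlog
    rw [abs_sub_log_sub_sub_log hx hxy, abs_sub_comm x y, abs_of_nonneg (sub_nonneg.2 hxy)]
    linarith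
  · rintro ⟨r, ⟨-, hr1⟩, h⟩
    obtain ⟨η, -, h⟩ := h 1 le_rfl
    have hc : 0 < (1 - r) / 2 := by linarith
    obtain ⟨y, hlog, hyη, hy2⟩ := ((Real.isLittleO_log_id_atTop.bound hc).and
      ((Filter.eventually_gt_atTop η).and (Filter.eventually_gt_atTop 2))).exists
    have hy1 : 1 ≤ y := by linarith
    have hle := h y hy1 (hyη.trans_le (le_abs_self y))
    rw [abs_sub_log_sub_sub_log le_rfl hy1, abs_sub_comm 1 y,
      abs_of_nonneg (sub_nonneg.2 hy1), Real.log_one] at hle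
    simp only [Real.norm_eq_abs, id] at hlog
    rw [abs_of_nonneg (Real.log_nonneg hy1), abs_of_nonneg (by linarith : 0 ≤ y)] at hlog
    nlinarith
end

section
/- Let E = c₀ be the Banach space of real sequences converging to 0 with the supremum norm, and let C = { x ∈ c₀ : 0 ≤ x(n) ≤ n for all n ∈ ℕ }, a closed convex subset of E. Define T on C by (Tx)(n) = max{0, x(n) − 2} for all n ∈ ℕ. Then T is a nonexpansive mapping on C, T satisfies condition (C5), and T does not satisfy condition (C3). -/
open ZeroAtInfty

namespace ZeroAtInftyContinuousMap

lemma abs_apply_le_norm (f : C₀(ℕ, ℝ)) (n : ℕ) : |f n| ≤ ‖f‖ := by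
  simpa using f.toBCF.norm_coe_le_norm n

lemma norm_le_of_forall_abs_le {f : C₀(ℕ, ℝ)} {r : ℝ} (hr : 0 ≤ r) (h : ∀ n, |f n| ≤ r) :
    ‖f‖ ≤ r := by
  rw [← norm_toBCF_eq_norm]
  exact (BoundedContinuousFunction.norm_le hr).2 h

/-- The sequence in `c₀` with value `a` at `n` and `0` elsewhere. -/
noncomputable def single (n : ℕ) (a : ℝ) : C₀(ℕ, ℝ) where
  toFun := Pi.single n a
  continuous_toFun := continuous_of_discreteTopology
  zero_at_infty' := by
    rw [Filter.cocompact_eq_cofinite, Nat.cofinite_eq_atTop]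
    refine tendsto_const_nhds.congr' ?_
    filter_upwards [Filter.eventually_gt_atTop n] with m hm
    simp [hm.ne']

lemma single_apply (n : ℕ) (a : ℝ) (m : ℕ) : single n a m = if m = n then a else 0 :=
  Pi.single_apply n a m

lemma norm_single (n : ℕ) (a : ℝ) : ‖single n a‖ = |a| := by
  apply le_antisymm
  · refine norm_le_of_forall_abs_le (abs_nonneg a) fun m => ?_
    rw [single_apply]
    split_ifs <;> simp
  · simpa [single_apply] using abs_apply_le_norm (single n a) n

end ZeroAtInftyContinuousMap

open ZeroAtInftyContinuousMap

/-- Example 2: in `c₀` (real sequences converging to `0`, with the supremum norm), let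
`C = { x : 0 ≤ x n ≤ n for all n }` and let `T` be given on `C` by
`(T x) n = max 0 (x n − 2)`.  Then `T` maps `C` into `C`, is nonexpansive on `C`,
satisfies (C5), and does not satisfy (C3). -/
theorem example_c0_c5_not_c3
    (C : Set C₀(ℕ, ℝ)) (hC : C = {x : C₀(ℕ, ℝ) | ∀ n : ℕ, 0 ≤ x n ∧ x n ≤ n})
    (T : C₀(ℕ, ℝ) → C₀(ℕ, ℝ)) (hT : ∀ x ∈ C, ∀ n : ℕ, T x n = max 0 (x n - 2)) :
    Set.MapsTo T C C ∧
    (∀ x ∈ C, ∀ y ∈ C, ‖T x - T y‖ ≤ ‖x - y‖) ∧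
    (∃ lam > (0 : ℝ), ∀ x₁ ∈ C, ∃ η > (0 : ℝ),
      ∀ y ∈ C, η < ‖y‖ → ‖T x₁ - T y‖ ≤ ‖x₁ - y‖ - lam) ∧
    ¬ (∀ lam > (0 : ℝ), ∀ x₁ ∈ C, ∃ η > (0 : ℝ),
      ∀ y ∈ C, η < ‖y‖ → ‖T x₁ - T y‖ ≤ ‖x₁ - y‖ - lam) := by
  subst hC
  have hle : ∀ x y : C₀(ℕ, ℝ), ∀ n, |x n - y n| ≤ ‖x - y‖ := fun x y n =>
    abs_apply_le_norm (x - y) n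
  have hcontr : ∀ a b : ℝ, |max 0 (a - 2) - max 0 (b - 2)| ≤ |a - b| := fun a b => by
    simpa [max_comm] using abs_max_sub_max_le_abs (a - 2) (b - 2) 0
  refine ⟨fun x hx n => ?_, fun x hx y hy => ?_, ⟨1, one_pos, fun x hx => ?_⟩, fun h => ?_⟩
  · rw [hT x hx n]
    obtain ⟨-, h₁⟩ := hx n
    exact ⟨le_max_left _ _, max_le n.cast_nonneg (by linarith)⟩
  · refine norm_le_of_forall_abs_le (norm_nonneg _) fun n => ?_
    rw [ZeroAtInftyContinuousMap.sub_apply, hT x hx, hT y hy]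
    exact (hcontr _ _).trans (hle x y n)
  · have hlim : Filter.Tendsto x Filter.atTop (nhds 0) := by
      simpa [Filter.cocompact_eq_cofinite, Nat.cofinite_eq_atTop] using x.zero_at_infty'
    obtain ⟨N, hN⟩ := Filter.eventually_atTop.1 (hlim.eventually_lt_const one_pos)
    refine ⟨N + 1 + ‖x‖, by positivity, fun y hy hlt => ?_⟩
    have hM : (N : ℝ) + 1 ≤ ‖x - y‖ := by
      have := norm_sub_norm_le y x
      rw [norm_sub_rev] at this
      linarith
    have hN₀ : (0 : ℝ) ≤ N := N.cast_nonneg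
    refine norm_le_of_forall_abs_le (by linarith) fun n => ?_
    rw [ZeroAtInftyContinuousMap.sub_apply, hT x hx, hT y hy]
    obtain ⟨hx₀, hx₁⟩ := hx n
    obtain ⟨hy₀, hy₁⟩ := hy n
    rcases lt_or_ge n N with hn | hn
    · have hn' : (n : ℝ) ≤ N := by exact_mod_cast hn.le
      have : |x n - y n| ≤ n := abs_le.2 ⟨by linarith, by linarith⟩
      linarith [hcontr (x n) (y n)]
    · have hxn := hN n hn
      have := (abs_le.1 (hle x y n)).1
      rw [max_eq_left (by linarith : x n - 2 ≤ 0), zero_sub, abs_neg,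
        abs_of_nonneg (le_max_left _ _)]
      exact max_le (by linarith) (by linarith)
  · have h0 : (0 : C₀(ℕ, ℝ)) ∈ {x : C₀(ℕ, ℝ) | ∀ n : ℕ, 0 ≤ x n ∧ x n ≤ n} := fun n => by simp
    obtain ⟨η, -, hη⟩ := h 3 (by norm_num) 0 h0
    obtain ⟨n, hn⟩ := exists_nat_gt η
    have hnorm : ‖single n (n : ℝ)‖ = n := by simp [norm_single]
    have hmem : single n (n : ℝ) ∈ {x : C₀(ℕ, ℝ) | ∀ n : ℕ, 0 ≤ x n ∧ x n ≤ n} := fun m => by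
      rw [single_apply]
      split_ifs with hm <;> simp [hm]
    have hbound := hη _ hmem (by rwa [hnorm])
    rw [zero_sub, norm_neg, hnorm] at hbound
    have hval := (abs_le.1 (hle (T 0) (T (single n (n : ℝ))) n)).1
    rw [hT _ h0, hT _ hmem, single_apply, if_pos rfl] at hval
    have h2 : max (0 : ℝ) ((0 : C₀(ℕ, ℝ)) n - 2) = 0 := by simp
    linarith [le_max_right (0 : ℝ) ((n : ℝ) - 2)]
end
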